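/- For all x, y, z, w ∈ 𝓡 with x ⪯ z and y ⪯ w, one has x ⊕ y ⪯ z ⊕ w. -/

import Mathlib

/-- The ambient space `𝓡` of decimal representations: an integer part together
with a sequence of digits in `{0,…,9}`. -/
abbrev DecimalRep := ℤ × (ℕ → Fin 10)

namespace DecimalRep

open scoped Classical

/-- The truncation `[x]_k = x₀ + ∑_{i=1}^k x_i / 10^i` of `x` up to the `k`-th
digit, as a rational number. -/
def trunc (x : DecimalRep) (k : ℕ) : ℚ :=
  (x.1 : ℚ) + ∑ i ∈ Finset.range k, ((x.2 i : ℕ) : ℚ) / 10 ^ (i + 1)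

/-- The order `⪯` on `𝓡`: `x ⪯ y` iff every truncation of `x` is at most the
corresponding truncation of `y`. -/
def le (x y : DecimalRep) : Prop := ∀ k : ℕ, trunc x k ≤ trunc y k

/-- The strict order `≺` on `𝓡`. -/
def lt (x y : DecimalRep) : Prop := le x y ∧ x ≠ y

/-- Two decimal representations are equivalent ("have no gap") iff there is no
third element lying between them. -/
def equiv (x y : DecimalRep) : Prop :=
  ¬ ∃ z : DecimalRep, z ≠ x ∧ z ≠ y ∧
      ((le x z ∧ le z y) ∨ (le y z ∧ le z x))

/-- `𝓡₉`: decimal representations ending in an infinite string of nines. -/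
def allNines (x : DecimalRep) : Prop := ∃ N : ℕ, ∀ k ≥ N, x.2 k = 9

/-- `ℚ_F`: decimal representations ending in an infinite string of zeros. -/
def finiteDec (x : DecimalRep) : Prop := ∃ N : ℕ, ∀ k ≥ N, x.2 k = 0

/-- The decimal expansion map `ι : ℚ → 𝓡`, satisfying
`[ι(α)]_k = ⌊10^k·α⌋/10^k` for all `k`. -/
def iota (α : ℚ) : DecimalRep :=
  (⌊α⌋, fun k => ⟨(⌊α * 10 ^ (k + 1)⌋ % 10).toNat, by
    have h1 : (0 : ℤ) ≤ ⌊α * 10 ^ (k + 1)⌋ % 10 := Int.emod_nonneg _ (by norm_num)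
    have h2 : ⌊α * 10 ^ (k + 1)⌋ % 10 < 10 := Int.emod_lt_of_pos _ (by norm_num)
    omega⟩)

/-- `M` is a least upper bound of `W` in `(𝓡,⪯)`. -/
def IsLub (W : Set DecimalRep) (M : DecimalRep) : Prop :=
  (∀ w ∈ W, le w M) ∧ ∀ M' : DecimalRep, (∀ w ∈ W, le w M') → le M M'

/-- `M` is a greatest lower bound of `W` in `(𝓡,⪯)`. -/
def IsGlb (W : Set DecimalRep) (M : DecimalRep) : Prop :=
  (∀ w ∈ W, le M w) ∧ ∀ M' : DecimalRep, (∀ w ∈ W, le M' w) → le M' M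

/-- The least upper bound of a set in `(𝓡,⪯)` (junk value if none exists). -/
noncomputable def sup (W : Set DecimalRep) : DecimalRep :=
  if h : ∃ M, IsLub W M then h.choose else default

/-- The greatest lower bound of a set in `(𝓡,⪯)` (junk value if none exists). -/
noncomputable def inf (W : Set DecimalRep) : DecimalRep :=
  if h : ∃ M, IsGlb W M then h.choose else default

/-- Addition `x ⊕ y := sup {ι([x]_k + [y]_k) : k ∈ ℕ}` on `𝓡`. -/
noncomputable def add (x y : DecimalRep) : DecimalRep :=
  sup { z | ∃ k : ℕ, z = iota (trunc x k + trunc y k) }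

/-- The "additive inverse" map `Ψ(x₀.x₁x₂⋯) = (−1−x₀).(9−x₁)(9−x₂)⋯`. -/
def psi (x : DecimalRep) : DecimalRep :=
  (-1 - x.1, fun k => ⟨9 - (x.2 k).val, by have := (x.2 k).isLt; omega⟩)

/-- The signal map: `0` on the nonnegative part, `1` on the negative part. -/
noncomputable def sign (x : DecimalRep) : ℕ :=
  if le (iota 0) x then 0 else 1

/-- The absolute value `‖x‖ := max {x, Ψ(x)}` with respect to `⪯`. -/
noncomputable def norm (x : DecimalRep) : DecimalRep :=
  if le x (psi x) then psi x else x

/-- Multiplication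
`x ⊗ y := Ψ^(sign x + sign y) (sup {ι([‖x‖]_k · [‖y‖]_k) : k ∈ ℕ})` on `𝓡`. -/
noncomputable def mul (x y : DecimalRep) : DecimalRep :=
  psi^[sign x + sign y]
    (sup { z | ∃ k : ℕ, z = iota (trunc (norm x) k * trunc (norm y) k) })

/-- The multiplicative inverse
`x⁻¹ := Ψ^(sign x) (inf {ι(1/[‖x‖]_k) : k ∈ ℕ, [‖x‖]_k > 0})`. -/
noncomputable def inv (x : DecimalRep) : DecimalRep :=
  psi^[sign x]
    (inf { z | ∃ k : ℕ, 0 < trunc (norm x) k ∧ z = iota (1 / trunc (norm x) k) })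

/-- A sequence of rationals is Cauchy. -/
def IsCauchy (x : ℕ → ℚ) : Prop :=
  ∀ ε : ℚ, 0 < ε → ∃ N : ℕ, ∀ m n : ℕ, N ≤ m → N ≤ n → |x m - x n| < ε

/-- The upper limit `inf { sup {f k : k ≥ n} : n ∈ ℕ }` of a sequence in `𝓡`. -/
noncomputable def upperLimit (f : ℕ → DecimalRep) : DecimalRep :=
  inf { z | ∃ n : ℕ, z = sup { w | ∃ k : ℕ, n ≤ k ∧ w = f k } }

/-- The lower limit `sup { inf {f k : k ≥ n} : n ∈ ℕ }` of a sequence in `𝓡`. -/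
noncomputable def lowerLimit (f : ℕ → DecimalRep) : DecimalRep :=
  sup { z | ∃ n : ℕ, z = inf { w | ∃ k : ℕ, n ≤ k ∧ w = f k } }

end DecimalRep

namespace DecimalRep

lemma aux_trunc (F : ℕ → ℤ) (x : DecimalRep) (h0 : x.1 = F 0)
    (hd : ∀ k, ((x.2 k : ℕ) : ℤ) = F (k + 1) % 10)
    (hF : ∀ k, F k = F (k + 1) / 10) (k : ℕ) : trunc x k = (F k : ℚ) / 10 ^ k := by
  induction k with
  | zero => simp [trunc, h0]
  | succ k ih =>
    have e : trunc x (k + 1) = trunc x k + ((x.2 k : ℕ) : ℚ) / 10 ^ (k + 1) := by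
      simp only [trunc, Finset.sum_range_succ]; ring
    have h3 : F (k + 1) = 10 * F k + ((x.2 k : ℕ) : ℤ) := by
      have := hF k
      have := hd k
      omega
    have h4 : (F (k + 1) : ℚ) = 10 * F k + ((x.2 k : ℕ) : ℚ) := by exact_mod_cast h3
    rw [e, ih, h4]
    field_simp
    ring

lemma aux_floor (a : ℚ) (k : ℕ) : ⌊a * 10 ^ k⌋ = ⌊a * 10 ^ (k + 1)⌋ / 10 := by
  have h1 := Int.floor_le (a * 10 ^ (k + 1))
  have h2 := Int.lt_floor_add_one (a * 10 ^ (k + 1))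
  have e : a * 10 ^ (k + 1) = 10 * (a * 10 ^ k) := by ring
  rw [e] at h1 h2 ⊢
  generalize a * 10 ^ k = b at *
  generalize ⌊10 * b⌋ = n at *
  rw [Int.floor_eq_iff]
  have h3 : 10 * (n / 10) ≤ n := by omega
  have h4 : n + 1 ≤ 10 * (n / 10) + 10 := by omega
  have h3' : (10 : ℚ) * ((n / 10 : ℤ) : ℚ) ≤ n := by exact_mod_cast h3
  have h4' : (n : ℚ) + 1 ≤ 10 * ((n / 10 : ℤ) : ℚ) + 10 := by exact_mod_cast h4
  constructor <;> linarith

lemma aux_iota (a : ℚ) (k : ℕ) : trunc (iota a) k = (⌊a * 10 ^ k⌋ : ℚ) / 10 ^ k := by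
  refine aux_trunc (fun k => ⌊a * 10 ^ k⌋) (iota a) (by simp [iota]) ?_ (aux_floor a) k
  intro k
  simp only [iota]
  exact Int.toNat_of_nonneg (Int.emod_nonneg _ (by norm_num))

lemma aux_iota_mono {a b : ℚ} (h : a ≤ b) : le (iota a) (iota b) := by
  intro k
  rw [aux_iota, aux_iota]
  gcongr

lemma aux_mono (x : DecimalRep) : Monotone (trunc x) := by
  refine monotone_nat_of_le_succ fun k => ?_
  simp only [trunc, Finset.sum_range_succ]
  have : (0 : ℚ) ≤ ((x.2 k : ℕ) : ℚ) / 10 ^ (k + 1) := by positivity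
  linarith

lemma aux_bdd (x : DecimalRep) (k : ℕ) : trunc x k ≤ x.1 + 1 := by
  have : trunc x k ≤ x.1 + 1 - 1 / 10 ^ k := by
    induction k with
    | zero => simp [trunc]
    | succ k ih =>
      have e : trunc x (k + 1) = trunc x k + ((x.2 k : ℕ) : ℚ) / 10 ^ (k + 1) := by
        simp only [trunc, Finset.sum_range_succ]; ring
      have h9 : ((x.2 k : ℕ) : ℚ) ≤ 9 := by
        have := (x.2 k).isLt
        exact_mod_cast (by omega : (x.2 k : ℕ) ≤ 9)
      have h : ((x.2 k : ℕ) : ℚ) / 10 ^ (k + 1) ≤ 9 / 10 ^ (k + 1) := by gcongr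
      have e2 : (1 : ℚ) / 10 ^ k = 9 / 10 ^ (k + 1) + 1 / 10 ^ (k + 1) := by
        field_simp; ring
      linarith
  have : (0 : ℚ) ≤ 1 / 10 ^ k := by positivity
  linarith

lemma aux_lub (s : ℕ → ℚ) (hs : Monotone s) (B : ℚ) (hB : ∀ k, s k ≤ B) :
    ∃ M, IsLub { z | ∃ k : ℕ, z = iota (s k) } M := by
  have h : ∀ k : ℕ, ∃ m : ℤ, (∃ j, m = ⌊s j * 10 ^ k⌋) ∧ ∀ j, ⌊s j * 10 ^ k⌋ ≤ m := by
    intro k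
    obtain ⟨m, h1, h2⟩ := Int.exists_greatest_of_bdd (P := fun m => ∃ j, m = ⌊s j * 10 ^ k⌋)
      ⟨⌊B * 10 ^ k⌋, by
        rintro _ ⟨j, rfl⟩
        have := hB j
        gcongr⟩ ⟨_, 0, rfl⟩
    exact ⟨m, h1, fun j => h2 _ ⟨j, rfl⟩⟩
  choose F hF1 hF2 using h
  have hm : ∀ k i j, i ≤ j → F k = ⌊s i * 10 ^ k⌋ → F k = ⌊s j * 10 ^ k⌋ := by
    intro k i j hij e
    refine le_antisymm ?_ (hF2 k j)
    rw [e]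
    have := hs hij
    gcongr
  have hF : ∀ k, F k = F (k + 1) / 10 := by
    intro k
    obtain ⟨i, hi⟩ := hF1 k
    obtain ⟨j, hj⟩ := hF1 (k + 1)
    rw [hm _ _ _ (le_max_left i j) hi, hm _ _ _ (le_max_right i j) hj]
    exact aux_floor _ _
  let M : DecimalRep := (F 0, fun k => ⟨(F (k + 1) % 10).toNat, by omega⟩)
  have hM : ∀ k, trunc M k = (F k : ℚ) / 10 ^ k := by
    refine aux_trunc F M rfl ?_ hF
    intro k
    exact Int.toNat_of_nonneg (Int.emod_nonneg _ (by norm_num))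
  refine ⟨M, ?_, ?_⟩
  · rintro _ ⟨j, rfl⟩ k
    rw [hM, aux_iota]
    have := hF2 k j
    gcongr
  · intro M' h k
    obtain ⟨j, hj⟩ := hF1 k
    have := h _ ⟨j, rfl⟩ k
    rwa [aux_iota, ← hj, ← hM] at this

lemma aux_add (x y : DecimalRep) :
    IsLub { z | ∃ k : ℕ, z = iota (trunc x k + trunc y k) } (add x y) := by
  have h := aux_lub (fun k => trunc x k + trunc y k)
    (fun i j hij => add_le_add (aux_mono x hij) (aux_mono y hij)) (x.1 + 1 + (y.1 + 1))
    (fun k => add_le_add (aux_bdd x k) (aux_bdd y k))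
  unfold add sup
  rw [dif_pos h]
  exact h.choose_spec

end DecimalRep

open DecimalRep in
/-- Addition on `𝓡` preserves the order `⪯`. -/
theorem decimal_add_le_add (x y z w : DecimalRep) (hxz : le x z) (hyw : le y w) :
    le (add x y) (add z w) := by
  refine (aux_add x y).2 _ ?_
  rintro _ ⟨k, rfl⟩ j
  exact (aux_iota_mono (add_le_add (hxz k) (hyw k)) j).trans ((aux_add z w).1 _ ⟨k, rfl⟩ j)
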